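/- Let n ≥ 1, let 1 ≤ p, q ≤ ∞, s > 0, α > 0 and β > 0, and choose 1 ≤ p₁, p₂, p₃, p₄, q₁, q₂, q₃, q₄ ≤ ∞ so that 1/p = 1/p₁ + 1/p₂ = 1/p₃ + 1/p₄ and 1/q = 1/q₁ + 1/q₂ = 1/q₃ + 1/q₄. Then there exists a constant C > 0, depending only on n, s, α, β and these indices, such that for all Schwartz functions f₁, f₂ on ℝⁿ the inequality ‖f₁ · f₂‖_{Ḃ^s_{p,q}} ≤ C (‖f₁‖_{Ḃ^{s+α}_{p₁,q₁}} ‖f₂‖_{Ḃ^{-α}_{p₂,q₂}} + ‖f₁‖_{Ḃ^{-β}_{p₃,q₃}} ‖f₂‖_{Ḃ^{s+β}_{p₄,q₄}}) holds in [0,∞]. -/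

import Mathlib

open MeasureTheory Real Complex Filter Function
open scoped ENNReal FourierTransform SchwartzMap

noncomputable section

/-- The properties of the radial smooth cutoff `χ` used to build the
Littlewood–Paley decomposition: smooth, compactly supported, radial,
`0 ≤ χ ≤ 1`, `χ = 1` on `{‖ξ‖ ≤ 3/4}` and `χ = 0` on `{‖ξ‖ > 4/3}`. -/
def IsLPCutoff {n : ℕ} (χ : EuclideanSpace ℝ (Fin n) → ℝ) : Prop :=
  ContDiff ℝ ((⊤ : ℕ∞) : WithTop ℕ∞) χ ∧ HasCompactSupport χ ∧
    (∀ ξ η, ‖ξ‖ = ‖η‖ → χ ξ = χ η) ∧ (∀ ξ, 0 ≤ χ ξ) ∧ (∀ ξ, χ ξ ≤ 1) ∧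
    (∀ ξ, ‖ξ‖ ≤ 3 / 4 → χ ξ = 1) ∧ (∀ ξ, 4 / 3 < ‖ξ‖ → χ ξ = 0)

/-- The low-frequency Littlewood–Paley projection `S_j f = 𝓕⁻¹(χ(·/2^j) 𝓕 f)`. -/
def Sproj {n : ℕ} (χ : EuclideanSpace ℝ (Fin n) → ℝ) (j : ℤ)
    (f : EuclideanSpace ℝ (Fin n) → ℂ) : EuclideanSpace ℝ (Fin n) → ℂ :=
  𝓕⁻ fun ξ => ((χ ((2 : ℝ) ^ (-j) • ξ) : ℝ) : ℂ) * 𝓕 f ξ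

/-- The Littlewood–Paley block `Δ_j f = 𝓕⁻¹(φ̂(·/2^j) 𝓕 f)`, where
`φ̂(ξ) = χ(ξ/2) - χ(ξ)`, i.e. `φ̂(ξ/2^j) = χ(ξ/2^(j+1)) - χ(ξ/2^j)`. -/
def Dproj {n : ℕ} (χ : EuclideanSpace ℝ (Fin n) → ℝ) (j : ℤ)
    (f : EuclideanSpace ℝ (Fin n) → ℂ) : EuclideanSpace ℝ (Fin n) → ℂ :=
  𝓕⁻ fun ξ => ((χ ((2 : ℝ) ^ (-(j + 1)) • ξ) - χ ((2 : ℝ) ^ (-j) • ξ) : ℝ) : ℂ) * 𝓕 f ξ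

/-- The `ℓ^q(ℤ)` norm of a sequence of extended nonnegative reals, with the usual
supremum modification for `q = ∞`. -/
def lqNorm (q : ℝ≥0∞) (a : ℤ → ℝ≥0∞) : ℝ≥0∞ :=
  if q = ∞ then ⨆ j, a j else (∑' j, a j ^ q.toReal) ^ (1 / q.toReal)

/-- The homogeneous Besov norm `‖f‖_{Ḃ^s_{p,q}}`, valued in `[0,∞]`. -/
def besovNorm {n : ℕ} (χ : EuclideanSpace ℝ (Fin n) → ℝ) (s : ℝ) (p q : ℝ≥0∞)
    (f : EuclideanSpace ℝ (Fin n) → ℂ) : ℝ≥0∞ :=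
  lqNorm q fun j => (2 : ℝ≥0∞) ^ ((j : ℝ) * s) * eLpNorm (Dproj χ j f) p volume

/-- An integral form of Minkowski's inequality: averaging functions with uniformly bounded
`L^p` norms against a weight `w`. -/
theorem lintegral_rpow_lintegral_mul_le {X Y : Type*} [MeasurableSpace X] [MeasurableSpace Y]
    {μ : Measure X} {ν : Measure Y} [SFinite μ] [SFinite ν] {r : ℝ} (hr : 1 ≤ r)
    {w : Y → ℝ≥0∞} (hw : Measurable w) {F : X → Y → ℝ≥0∞} (hF : Measurable (uncurry F))
    {M : ℝ≥0∞} (hM : ∀ y, ∫⁻ x, F x y ^ r ∂μ ≤ M) :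
    ∫⁻ x, (∫⁻ y, w y * F x y ∂ν) ^ r ∂μ ≤ (∫⁻ y, w y ∂ν) ^ r * M := by
  have hr0 : 0 < r := by linarith
  have hFx (x : X) : Measurable (F x) := hF.comp measurable_prodMk_left
  have jensen (x : X) : (∫⁻ y, w y * F x y ∂ν) ^ r ≤
      (∫⁻ y, w y ∂ν) ^ (r - 1) * ∫⁻ y, w y * F x y ^ r ∂ν := by
    rcases hr.eq_or_lt with rfl | hr1
    · simp
    have hc := (Real.HolderConjugate.conjExponent hr1).symm
    set r' := r.conjExponent with hr'
    have hr'0 : 0 < r' := hc.pos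
    have e (y : Y) : w y * F x y = w y ^ (1 / r') * (w y ^ (1 / r) * F x y) := by
      rw [← mul_assoc, ← ENNReal.rpow_add_of_nonneg _ _ (by positivity) (by positivity)]
      have : 1 / r' + 1 / r = 1 := by simpa using hc.inv_add_inv_eq_one
      rw [this, ENNReal.rpow_one]
    have H := ENNReal.lintegral_mul_le_Lp_mul_Lq ν hc (f := fun y => w y ^ (1 / r'))
      (g := fun y => w y ^ (1 / r) * F x y) (by fun_prop) (by
        have := hFx x
        fun_prop)
    simp only [Pi.mul_apply, ← e] at H
    calc _ ≤ _ := ENNReal.rpow_le_rpow H hr0.le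
      _ = _ := by
        rw [ENNReal.mul_rpow_of_nonneg _ _ hr0.le, ← ENNReal.rpow_mul, ← ENNReal.rpow_mul]
        congr 1
        · congr 1
          · simp [← ENNReal.rpow_mul, hr'0.ne']
          · rw [hr', Real.conjExponent]
            field_simp
        · rw [one_div_mul_cancel hr0.ne', ENNReal.rpow_one]
          refine lintegral_congr fun y => ?_
          rw [ENNReal.mul_rpow_of_nonneg _ _ hr0.le, ← ENNReal.rpow_mul,
            one_div_mul_cancel hr0.ne', ENNReal.rpow_one]
  have hm : Measurable (uncurry fun x y => w y * F x y ^ r) :=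
    (hw.comp measurable_snd).mul (hF.pow_const r)
  calc ∫⁻ x, (∫⁻ y, w y * F x y ∂ν) ^ r ∂μ
      ≤ ∫⁻ x, (∫⁻ y, w y ∂ν) ^ (r - 1) * ∫⁻ y, w y * F x y ^ r ∂ν ∂μ := lintegral_mono jensen
    _ = (∫⁻ y, w y ∂ν) ^ (r - 1) * ∫⁻ x, ∫⁻ y, w y * F x y ^ r ∂ν ∂μ :=
        lintegral_const_mul _ hm.lintegral_prod_right
    _ = (∫⁻ y, w y ∂ν) ^ (r - 1) * ∫⁻ y, w y * ∫⁻ x, F x y ^ r ∂μ ∂ν := by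
        rw [lintegral_lintegral_swap hm.aemeasurable]
        congr 1
        refine lintegral_congr fun y => lintegral_const_mul _ ?_
        exact (hF.comp measurable_prodMk_right).pow_const r
    _ ≤ (∫⁻ y, w y ∂ν) ^ (r - 1) * ∫⁻ y, w y * M ∂ν := by gcongr; exact hM _
    _ = (∫⁻ y, w y ∂ν) ^ r * M := by
        rw [lintegral_mul_const _ hw, ← mul_assoc]
        congr 1
        nth_rewrite 2 [← ENNReal.rpow_one (∫⁻ y, w y ∂ν)]
        rw [← ENNReal.rpow_add_of_nonneg _ _ (by linarith) zero_le_one, sub_add_cancel]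

theorem lqNorm_top (a : ℤ → ℝ≥0∞) : lqNorm ∞ a = ⨆ j, a j := if_pos rfl

theorem lqNorm_eq_lintegral {q : ℝ≥0∞} (hq : q ≠ ∞) (a : ℤ → ℝ≥0∞) :
    lqNorm q a = (∫⁻ j, a j ^ q.toReal ∂Measure.count) ^ (1 / q.toReal) := by
  rw [lqNorm, if_neg hq, lintegral_count]

theorem one_le_toReal_of_ne_top {q : ℝ≥0∞} (hq : 1 ≤ q) (h : q ≠ ∞) : 1 ≤ q.toReal := by
  simpa using ENNReal.toReal_mono h hq

theorem lqNorm_mono {q : ℝ≥0∞} {a b : ℤ → ℝ≥0∞} (h : ∀ j, a j ≤ b j) :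
    lqNorm q a ≤ lqNorm q b := by
  unfold lqNorm
  split_ifs
  · exact iSup_mono h
  · refine ENNReal.rpow_le_rpow (ENNReal.tsum_le_tsum fun j => ?_) (by positivity)
    exact ENNReal.rpow_le_rpow (h j) ENNReal.toReal_nonneg

theorem lqNorm_add_le {q : ℝ≥0∞} (hq : 1 ≤ q) (a b : ℤ → ℝ≥0∞) :
    lqNorm q (fun j => a j + b j) ≤ lqNorm q a + lqNorm q b := by
  rcases eq_or_ne q ∞ with rfl | h
  · simp only [lqNorm_top]
    exact iSup_le fun j => add_le_add (le_iSup a j) (le_iSup b j)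
  · simp only [lqNorm_eq_lintegral h]
    exact ENNReal.lintegral_Lp_add_le (by fun_prop) (by fun_prop) (one_le_toReal_of_ne_top hq h)

/-- Young's inequality `ℓ¹ * ℓ^q ⊆ ℓ^q`, for a superposition of translates. -/
theorem lqNorm_tsum_mul_translate_le {q : ℝ≥0∞} (hq : 1 ≤ q) (c : ℕ → ℝ≥0∞) (σ : ℕ → ℤ)
    (b : ℤ → ℝ≥0∞) :
    lqNorm q (fun k => ∑' m, c m * b (k + σ m)) ≤ (∑' m, c m) * lqNorm q b := by
  rcases eq_or_ne q ∞ with rfl | h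
  · simp only [lqNorm_top]
    refine iSup_le fun k => ?_
    rw [← ENNReal.tsum_mul_right]
    exact ENNReal.tsum_le_tsum fun m => by gcongr; exact le_iSup b _
  · have h1 := one_le_toReal_of_ne_top hq h
    have h0 : 0 < q.toReal := by linarith
    have H := lintegral_rpow_lintegral_mul_le (μ := (Measure.count : Measure ℤ))
      (ν := (Measure.count : Measure ℕ)) h1 (w := c) (by fun_prop)
      (F := fun k m => b (k + σ m)) (by fun_prop)
      (M := ∫⁻ j, b j ^ q.toReal ∂Measure.count) (fun m => by
        simp only [lintegral_count]
        exact ((Equiv.addRight (σ m)).tsum_eq (fun j => b j ^ q.toReal)).le)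
    simp only [lintegral_count] at H
    simp only [lqNorm_eq_lintegral h, lintegral_count]
    refine (ENNReal.rpow_le_rpow H (by positivity)).trans_eq ?_
    rw [ENNReal.mul_rpow_of_nonneg _ _ (by positivity), ← ENNReal.rpow_mul,
      mul_one_div_cancel h0.ne', ENNReal.rpow_one]

theorem lqNorm_const_mul_le {q : ℝ≥0∞} (hq : 1 ≤ q) (c : ℝ≥0∞) (b : ℤ → ℝ≥0∞) :
    lqNorm q (fun j => c * b j) ≤ c * lqNorm q b := by
  rcases eq_or_ne q ∞ with rfl | h
  · simp only [lqNorm_top, ENNReal.mul_iSup, le_refl]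
  · have h0 : 0 < q.toReal := by linarith [one_le_toReal_of_ne_top hq h]
    simp only [lqNorm, if_neg h, ENNReal.mul_rpow_of_nonneg _ _ h0.le, ENNReal.tsum_mul_left]
    rw [ENNReal.mul_rpow_of_nonneg _ _ (by positivity), ← ENNReal.rpow_mul,
      mul_one_div_cancel h0.ne', ENNReal.rpow_one]

/-- Hölder's inequality for `lqNorm`. -/
theorem lqNorm_mul_le {q q₁ q₂ : ℝ≥0∞} (hq : 1 ≤ q) (hq₁ : 1 ≤ q₁) (hq₂ : 1 ≤ q₂)
    (hqq : 1 / q = 1 / q₁ + 1 / q₂) (a b : ℤ → ℝ≥0∞) :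
    lqNorm q (fun j => a j * b j) ≤ lqNorm q₁ a * lqNorm q₂ b := by
  rcases eq_or_ne q₁ ∞ with rfl | h₁
  · obtain rfl : q = q₂ := by simpa using hqq
    refine (lqNorm_mono fun j => ?_).trans (lqNorm_const_mul_le hq (lqNorm ∞ a) b)
    rw [lqNorm_top]
    gcongr
    exact le_iSup a j
  rcases eq_or_ne q₂ ∞ with rfl | h₂
  · obtain rfl : q = q₁ := by simpa using hqq
    rw [mul_comm]
    refine (lqNorm_mono fun j => ?_).trans (lqNorm_const_mul_le hq (lqNorm ∞ b) a)
    rw [lqNorm_top, mul_comm]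
    gcongr
    exact le_iSup b j
  have h : q ≠ ∞ := by
    rintro rfl
    have : 0 = q₁⁻¹ + q₂⁻¹ := by simpa using hqq
    simp [h₁, eq_comm] at this
  have p₁ : 0 < q₁.toReal := by linarith [one_le_toReal_of_ne_top hq₁ h₁]
  have p₂ : 0 < q₂.toReal := by linarith [one_le_toReal_of_ne_top hq₂ h₂]
  have p₀ : 0 < q.toReal := by linarith [one_le_toReal_of_ne_top hq h]
  have hr : 1 / q.toReal = 1 / q₁.toReal + 1 / q₂.toReal := by
    have := congrArg ENNReal.toReal hqq
    rw [ENNReal.toReal_add (by simp; positivity) (by simp; positivity)] at this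
    simpa using this
  simp only [lqNorm_eq_lintegral h, lqNorm_eq_lintegral h₁, lqNorm_eq_lintegral h₂]
  refine ENNReal.lintegral_Lp_mul_le_Lq_mul_Lr p₀ ?_ hr _ (by fun_prop) (by fun_prop)
  exact lt_of_one_div_lt_one_div p₁ (hr ▸ lt_add_of_pos_right _ (by positivity))

/-- The `L^p` norm of a convolution with an integrable kernel. -/
theorem eLpNorm_le_of_enorm_le_lintegral_mul {G : Type*} [AddCommGroup G] [MeasurableSpace G]
    [MeasurableAdd₂ G] [MeasurableNeg G] {μ : Measure G} [SFinite μ] [μ.IsAddRightInvariant]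
    {p : ℝ≥0∞} (hp : 1 ≤ p) {k g h : G → ℂ} (hk : Measurable k) (hg : Measurable g)
    (hh : ∀ x, ‖h x‖ₑ ≤ ∫⁻ t, ‖k t‖ₑ * ‖g (x - t)‖ₑ ∂μ) :
    eLpNorm h p μ ≤ (∫⁻ t, ‖k t‖ₑ ∂μ) * eLpNorm g p μ := by
  rcases eq_or_ne p ∞ with rfl | hp'
  · have hb : ∀ᵐ y ∂μ, ‖g y‖ₑ ≤ eLpNorm g ∞ μ := by
      simpa using enorm_ae_le_eLpNormEssSup g μ
    rw [eLpNorm_exponent_top (f := h)]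
    refine essSup_le_of_ae_le _ (Eventually.of_forall fun x => (hh x).trans ?_)
    rw [← lintegral_mul_const _ hk.enorm]
    refine lintegral_mono_ae ?_
    filter_upwards [(quasiMeasurePreserving_sub_left_of_right_invariant μ x).ae hb] with t ht
    gcongr
  · have h1 := one_le_toReal_of_ne_top hp hp'
    have h0 : 0 < p.toReal := by linarith
    have hp0 : p ≠ 0 := (zero_lt_one.trans_le hp).ne'
    have H := lintegral_rpow_lintegral_mul_le (μ := μ) (ν := μ) h1 (w := fun t => ‖k t‖ₑ)
      (by fun_prop) (F := fun x t => ‖g (x - t)‖ₑ) (by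
        exact (hg.comp measurable_sub).enorm)
      (M := ∫⁻ x, ‖g x‖ₑ ^ p.toReal ∂μ) (fun t =>
        (lintegral_sub_right_eq_self (fun x => ‖g x‖ₑ ^ p.toReal) t).le)
    rw [eLpNorm_eq_lintegral_rpow_enorm_toReal hp0 hp',
      eLpNorm_eq_lintegral_rpow_enorm_toReal hp0 hp']
    calc _ ≤ (∫⁻ x, (∫⁻ t, ‖k t‖ₑ * ‖g (x - t)‖ₑ ∂μ) ^ p.toReal ∂μ) ^ (1 / p.toReal) := by
          gcongr
          exact hh _
      _ ≤ _ := ENNReal.rpow_le_rpow H (by positivity)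
      _ = _ := by
        rw [ENNReal.mul_rpow_of_nonneg _ _ (by positivity), ← ENNReal.rpow_mul,
          mul_one_div_cancel h0.ne', ENNReal.rpow_one]

/-- Countable subadditivity of the `L^p` norm along a pointwise convergent series. -/
theorem eLpNorm_le_tsum_of_tendsto {X : Type*} [MeasurableSpace X] {μ : Measure X} {p : ℝ≥0∞}
    (hp : 1 ≤ p) {u : ℕ → X → ℂ} (hu : ∀ m, AEStronglyMeasurable (u m) μ) {f : X → ℂ}
    (hf : ∀ x, Tendsto (fun N => ∑ m ∈ Finset.range N, u m x) atTop (nhds (f x))) :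
    eLpNorm f p μ ≤ ∑' m, eLpNorm (u m) p μ := by
  have H := Lp.eLpNorm_lim_le_liminf_eLpNorm (p := p) (μ := μ)
    (f := fun N => ∑ m ∈ Finset.range N, u m)
    (fun N => Finset.aestronglyMeasurable_sum _ fun m _ => hu m) f
    (Eventually.of_forall fun x => by simpa using hf x)
  refine H.trans (liminf_le_of_le (by isBoundedDefault) fun b hb => ?_)
  obtain ⟨N, hN⟩ := hb.exists
  exact hN.trans ((eLpNorm_sum_le (fun m _ => hu m) hp).trans (ENNReal.sum_le_tsum _))

section LittlewoodPaley

variable {n : ℕ} {χ : EuclideanSpace ℝ (Fin n) → ℝ}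

/-- The dilated cutoff `χ(·/2^j)` as a Schwartz function. -/
def IsLPCutoff.symbol (hχ : IsLPCutoff χ) (j : ℤ) : 𝓢(EuclideanSpace ℝ (Fin n), ℂ) :=
  HasCompactSupport.toSchwartzMap (f := fun ξ => ((χ ((2 : ℝ) ^ (-j) • ξ) : ℝ) : ℂ))
    ((hχ.2.1.comp_smul (by positivity : (2 : ℝ) ^ (-j) ≠ 0)).comp_left Complex.ofReal_zero)
    (Complex.ofRealCLM.contDiff.comp (hχ.1.comp (contDiff_const_smul _)))

theorem IsLPCutoff.symbol_apply (hχ : IsLPCutoff χ) (j : ℤ) (ξ : EuclideanSpace ℝ (Fin n)) :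
    hχ.symbol j ξ = ((χ ((2 : ℝ) ^ (-j) • ξ) : ℝ) : ℂ) := rfl

/-- `S_j` as an operator on Schwartz functions. -/
def IsLPCutoff.low (hχ : IsLPCutoff χ) (j : ℤ) (f : 𝓢(EuclideanSpace ℝ (Fin n), ℂ)) :
    𝓢(EuclideanSpace ℝ (Fin n), ℂ) :=
  SchwartzMap.convolution (ContinuousLinearMap.mul ℂ ℂ) (𝓕⁻ (hχ.symbol j)) f

/-- `Δ_j` as an operator on Schwartz functions. -/
def IsLPCutoff.block (hχ : IsLPCutoff χ) (j : ℤ) (f : 𝓢(EuclideanSpace ℝ (Fin n), ℂ)) :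
    𝓢(EuclideanSpace ℝ (Fin n), ℂ) :=
  hχ.low (j + 1) f - hχ.low j f

theorem IsLPCutoff.fourier_low (hχ : IsLPCutoff χ) (j : ℤ)
    (f : 𝓢(EuclideanSpace ℝ (Fin n), ℂ)) (ξ : EuclideanSpace ℝ (Fin n)) :
    𝓕 (hχ.low j f) ξ = ((χ ((2 : ℝ) ^ (-j) • ξ) : ℝ) : ℂ) * 𝓕 f ξ := by
  simp [IsLPCutoff.low, SchwartzMap.fourier_convolution, hχ.symbol_apply]

theorem IsLPCutoff.fourier_block (hχ : IsLPCutoff χ) (j : ℤ)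
    (f : 𝓢(EuclideanSpace ℝ (Fin n), ℂ)) (ξ : EuclideanSpace ℝ (Fin n)) :
    𝓕 (hχ.block j f) ξ =
      ((χ ((2 : ℝ) ^ (-(j + 1)) • ξ) - χ ((2 : ℝ) ^ (-j) • ξ) : ℝ) : ℂ) * 𝓕 f ξ := by
  have h : 𝓕 (hχ.block j f) = 𝓕 (hχ.low (j + 1) f) - 𝓕 (hχ.low j f) :=
    map_sub (FourierTransform.fourierCLM ℂ 𝓢(EuclideanSpace ℝ (Fin n), ℂ)) _ _
  rw [h, sub_apply, hχ.fourier_low, hχ.fourier_low]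
  push_cast
  ring

theorem IsLPCutoff.Dproj_eq (hχ : IsLPCutoff χ) (j : ℤ) (f : 𝓢(EuclideanSpace ℝ (Fin n), ℂ)) :
    Dproj χ j f = hχ.block j f := by
  have h : (fun ξ => ((χ ((2 : ℝ) ^ (-(j + 1)) • ξ) - χ ((2 : ℝ) ^ (-j) • ξ) : ℝ) : ℂ)
      * 𝓕 (f : EuclideanSpace ℝ (Fin n) → ℂ) ξ) = ⇑(𝓕 (hχ.block j f) : 𝓢(EuclideanSpace ℝ (Fin n), ℂ)) :=
    funext fun ξ => (hχ.fourier_block j f ξ).symm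
  rw [Dproj, h, ← SchwartzMap.fourierInv_coe, FourierTransform.fourierInv_fourier_eq]

theorem IsLPCutoff.low_apply (hχ : IsLPCutoff χ) (j : ℤ) (f : 𝓢(EuclideanSpace ℝ (Fin n), ℂ))
    (x : EuclideanSpace ℝ (Fin n)) :
    hχ.low j f x = ∫ t, 𝓕⁻ (hχ.symbol j) t * f (x - t) := by
  rw [IsLPCutoff.low, SchwartzMap.convolution_apply]
  rfl

theorem IsLPCutoff.low_apply_eq_integral_fourier (hχ : IsLPCutoff χ) (j : ℤ)
    (f : 𝓢(EuclideanSpace ℝ (Fin n), ℂ)) (x : EuclideanSpace ℝ (Fin n)) :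
    hχ.low j f x =
      ∫ ξ, 𝐞 (inner ℝ ξ x) • (((χ ((2 : ℝ) ^ (-j) • ξ) : ℝ) : ℂ) * 𝓕 f ξ) := by
  have h : 𝓕⁻ (𝓕 (hχ.low j f) : 𝓢(EuclideanSpace ℝ (Fin n), ℂ)) = hχ.low j f :=
    FourierTransform.fourierInv_fourier_eq _
  rw [← h, SchwartzMap.fourierInv_coe, Real.fourierInv_eq]
  simp only [hχ.fourier_low]

/-- The kernels of the `S_j` are dilates of each other, so share the same `L¹` norm. -/
theorem IsLPCutoff.integral_norm_kernel (hχ : IsLPCutoff χ) (j : ℤ) :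
    ∫ t, ‖𝓕⁻ (hχ.symbol j) t‖ = ∫ t, ‖𝓕⁻ (hχ.symbol 0) t‖ := by
  have h2 : (0 : ℝ) < 2 ^ j := by positivity
  have key (t : EuclideanSpace ℝ (Fin n)) :
      𝓕⁻ (hχ.symbol j) t = (((2 : ℝ) ^ j) ^ n) • 𝓕⁻ (hχ.symbol 0) ((2 : ℝ) ^ j • t) := by
    rw [SchwartzMap.fourierInv_coe, SchwartzMap.fourierInv_coe, Real.fourierInv_eq,
      Real.fourierInv_eq]
    have H := Measure.integral_comp_smul (volume : Measure (EuclideanSpace ℝ (Fin n)))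
      (fun ξ => 𝐞 (inner ℝ ξ ((2 : ℝ) ^ j • t)) • hχ.symbol 0 ξ) ((2 : ℝ) ^ (-j))
    rw [finrank_euclideanSpace_fin, zpow_neg, inv_pow, inv_inv, abs_of_nonneg (by positivity)] at H
    rw [← H]
    refine integral_congr_ae (Eventually.of_forall fun ξ => ?_)
    simp [hχ.symbol_apply, real_inner_smul_left, real_inner_smul_right, h2.ne']
  simp_rw [key, norm_smul]
  rw [integral_const_mul, Measure.integral_comp_smul volume (fun t => ‖𝓕⁻ (hχ.symbol 0) t‖)]
  rw [finrank_euclideanSpace_fin, Real.norm_of_nonneg (by positivity),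
    abs_of_nonneg (by positivity), smul_eq_mul, ← mul_assoc, mul_inv_cancel₀ (by positivity),
    one_mul]

theorem IsLPCutoff.lintegral_enorm_kernel (hχ : IsLPCutoff χ) (j : ℤ) :
    ∫⁻ t, ‖𝓕⁻ (hχ.symbol j) t‖ₑ = ∫⁻ t, ‖𝓕⁻ (hχ.symbol 0) t‖ₑ := by
  rw [← ofReal_integral_norm_eq_lintegral_enorm (SchwartzMap.integrable _),
    ← ofReal_integral_norm_eq_lintegral_enorm (SchwartzMap.integrable _),
    hχ.integral_norm_kernel]

/-- The common norm of the operators `S_j` on `L^p`. -/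
def IsLPCutoff.kernelNorm (hχ : IsLPCutoff χ) : ℝ≥0∞ := ∫⁻ t, ‖𝓕⁻ (hχ.symbol 0) t‖ₑ

theorem IsLPCutoff.kernelNorm_lt_top (hχ : IsLPCutoff χ) : hχ.kernelNorm < ∞ :=
  (SchwartzMap.integrable (𝓕⁻ (hχ.symbol 0))).2

theorem IsLPCutoff.eLpNorm_low_le (hχ : IsLPCutoff χ) {p : ℝ≥0∞} (hp : 1 ≤ p) (j : ℤ)
    (f : 𝓢(EuclideanSpace ℝ (Fin n), ℂ)) :
    eLpNorm (hχ.low j f) p volume ≤ hχ.kernelNorm * eLpNorm f p volume := by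
  rw [IsLPCutoff.kernelNorm, ← hχ.lintegral_enorm_kernel j]
  refine eLpNorm_le_of_enorm_le_lintegral_mul hp (SchwartzMap.continuous _).measurable
    f.continuous.measurable fun x => ?_
  rw [hχ.low_apply]
  simpa only [enorm_mul] using
    enorm_integral_le_lintegral_enorm (fun t => 𝓕⁻ (hχ.symbol j) t * f (x - t))

theorem IsLPCutoff.eLpNorm_block_le (hχ : IsLPCutoff χ) {p : ℝ≥0∞} (hp : 1 ≤ p) (j : ℤ)
    (f : 𝓢(EuclideanSpace ℝ (Fin n), ℂ)) :
    eLpNorm (hχ.block j f) p volume ≤ 2 * hχ.kernelNorm * eLpNorm f p volume := by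
  have h : ⇑(hχ.block j f) = ⇑(hχ.low (j + 1) f) - ⇑(hχ.low j f) := rfl
  rw [h, mul_assoc, two_mul]
  exact (eLpNorm_sub_le (SchwartzMap.continuous _).aestronglyMeasurable
    (SchwartzMap.continuous _).aestronglyMeasurable hp).trans
    (add_le_add (hχ.eLpNorm_low_le hp _ f) (hχ.eLpNorm_low_le hp _ f))

/-- The product of two Schwartz functions. -/
def schwartzMul (f g : 𝓢(EuclideanSpace ℝ (Fin n), ℂ)) : 𝓢(EuclideanSpace ℝ (Fin n), ℂ) :=
  SchwartzMap.pairing (ContinuousLinearMap.mul ℂ ℂ) f g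

theorem schwartzMul_apply (f g : 𝓢(EuclideanSpace ℝ (Fin n), ℂ)) (x : EuclideanSpace ℝ (Fin n)) :
    schwartzMul f g x = f x * g x := rfl

theorem fourier_fourier_apply (f : 𝓢(EuclideanSpace ℝ (Fin n), ℂ))
    (x : EuclideanSpace ℝ (Fin n)) :
    𝓕 (𝓕 f : 𝓢(EuclideanSpace ℝ (Fin n), ℂ)) x = f (-x) := by
  have h : 𝓕⁻ (𝓕 f : 𝓢(EuclideanSpace ℝ (Fin n), ℂ)) = f :=
    FourierTransform.fourierInv_fourier_eq _
  conv_rhs => rw [← h]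
  rw [SchwartzMap.fourierInv_coe, Real.fourierInv_eq_fourier_neg, neg_neg, SchwartzMap.fourier_coe]

/-- The Fourier transform of a product is the convolution of the Fourier transforms. -/
theorem fourier_schwartzMul_apply (f g : 𝓢(EuclideanSpace ℝ (Fin n), ℂ))
    (ξ : EuclideanSpace ℝ (Fin n)) :
    𝓕 (schwartzMul f g) ξ = ∫ η, 𝓕 f η * 𝓕 g (ξ - η) := by
  have h : SchwartzMap.convolution (ContinuousLinearMap.mul ℂ ℂ)
      (𝓕 f : 𝓢(EuclideanSpace ℝ (Fin n), ℂ)) (𝓕 g) = 𝓕 (schwartzMul f g) := by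
    have h2 : 𝓕 (SchwartzMap.convolution (ContinuousLinearMap.mul ℂ ℂ)
      (𝓕 f : 𝓢(EuclideanSpace ℝ (Fin n), ℂ)) (𝓕 g)) =
        𝓕 (𝓕 (schwartzMul f g) : 𝓢(EuclideanSpace ℝ (Fin n), ℂ)) := by
      ext x
      rw [SchwartzMap.fourier_convolution, SchwartzMap.pairing_apply_apply,
        fourier_fourier_apply, fourier_fourier_apply, fourier_fourier_apply]
      rfl
    have := congrArg (fun u : 𝓢(EuclideanSpace ℝ (Fin n), ℂ) =>
      (𝓕⁻ u : 𝓢(EuclideanSpace ℝ (Fin n), ℂ))) h2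
    simpa using this
  rw [← h, SchwartzMap.convolution_apply]
  rfl

theorem IsLPCutoff.symbol_dilate_eq_zero (hχ : IsLPCutoff χ) {j : ℤ}
    {ξ : EuclideanSpace ℝ (Fin n)} (h : (2 : ℝ) ^ j * (4 / 3) < ‖ξ‖) :
    χ ((2 : ℝ) ^ (-j) • ξ) = 0 := by
  refine hχ.2.2.2.2.2.2 _ ?_
  rw [norm_smul, Real.norm_of_nonneg (by positivity), zpow_neg, inv_mul_eq_div,
    lt_div_iff₀ (by positivity), mul_comm]
  exact h

theorem IsLPCutoff.symbol_dilate_eq_one (hχ : IsLPCutoff χ) {j : ℤ}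
    {ξ : EuclideanSpace ℝ (Fin n)} (h : ‖ξ‖ ≤ (2 : ℝ) ^ j * (3 / 4)) :
    χ ((2 : ℝ) ^ (-j) • ξ) = 1 := by
  refine hχ.2.2.2.2.2.1 _ ?_
  rw [norm_smul, Real.norm_of_nonneg (by positivity), zpow_neg, inv_mul_eq_div,
    div_le_iff₀ (by positivity), mul_comm]
  exact h

/-- A product of low frequency parts carries no high frequencies. -/
theorem IsLPCutoff.block_mul_low_low (hχ : IsLPCutoff χ) (j : ℤ)
    (f g : 𝓢(EuclideanSpace ℝ (Fin n), ℂ)) :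
    hχ.block j (schwartzMul (hχ.low (j - 2) f) (hχ.low (j - 2) g)) = 0 := by
  have h2 : (0 : ℝ) < 2 ^ j := by positivity
  have e1 : (2 : ℝ) ^ (j + 1) = 2 ^ j * 2 := by rw [zpow_add₀ two_ne_zero, zpow_one]
  have e2 : (2 : ℝ) ^ (j - 2) = 2 ^ j / 4 := by
    rw [zpow_sub₀ two_ne_zero]
    norm_num
  have key : 𝓕 (hχ.block j (schwartzMul (hχ.low (j - 2) f) (hχ.low (j - 2) g))) =
      (0 : 𝓢(EuclideanSpace ℝ (Fin n), ℂ)) := by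
    ext ξ
    rw [hχ.fourier_block, zero_apply]
    rcases le_or_gt ‖ξ‖ ((2 : ℝ) ^ j * (3 / 4)) with h | h
    · rw [hχ.symbol_dilate_eq_one h, hχ.symbol_dilate_eq_one (by rw [e1]; linarith)]
      simp
    · rw [fourier_schwartzMul_apply]
      refine mul_eq_zero_of_right _ ?_
      rw [← integral_zero (EuclideanSpace ℝ (Fin n)) ℂ (μ := volume)]
      refine integral_congr_ae (Eventually.of_forall fun η => ?_)
      simp only [hχ.fourier_low]
      rcases lt_or_ge ((2 : ℝ) ^ (j - 2) * (4 / 3)) ‖η‖ with h' | h'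
      · rw [hχ.symbol_dilate_eq_zero h']
        simp
      · have : (2 : ℝ) ^ (j - 2) * (4 / 3) < ‖ξ - η‖ := by
          have := norm_sub_norm_le ξ η
          rw [e2] at h' ⊢
          linarith
        rw [hχ.symbol_dilate_eq_zero this]
        simp
  have h3 := congrArg (fun u : 𝓢(EuclideanSpace ℝ (Fin n), ℂ) =>
    (𝓕⁻ u : 𝓢(EuclideanSpace ℝ (Fin n), ℂ))) key
  have h4 : (𝓕⁻ (0 : 𝓢(EuclideanSpace ℝ (Fin n), ℂ)) : 𝓢(EuclideanSpace ℝ (Fin n), ℂ)) = 0 :=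
    map_zero (FourierTransform.fourierInvCLM ℂ 𝓢(EuclideanSpace ℝ (Fin n), ℂ))
  simpa [h4] using h3

theorem IsLPCutoff.norm_integrand_le (hχ : IsLPCutoff χ) (j : ℤ)
    (f : 𝓢(EuclideanSpace ℝ (Fin n), ℂ)) (x ξ : EuclideanSpace ℝ (Fin n)) :
    ‖𝐞 (inner ℝ ξ x) • (((χ ((2 : ℝ) ^ (-j) • ξ) : ℝ) : ℂ) * 𝓕 f ξ)‖ ≤ ‖𝓕 f ξ‖ := by
  rw [Circle.norm_smul, norm_mul, Complex.norm_real, Real.norm_of_nonneg (hχ.2.2.2.1 _)]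
  exact mul_le_of_le_one_left (norm_nonneg _) (hχ.2.2.2.2.1 _)

theorem IsLPCutoff.norm_low_le (hχ : IsLPCutoff χ) (j : ℤ)
    (f : 𝓢(EuclideanSpace ℝ (Fin n), ℂ)) (x : EuclideanSpace ℝ (Fin n)) :
    ‖hχ.low j f x‖ ≤ ∫ ξ, ‖𝓕 f ξ‖ := by
  rw [hχ.low_apply_eq_integral_fourier]
  exact norm_integral_le_of_norm_le (SchwartzMap.integrable _).norm
    (Eventually.of_forall (hχ.norm_integrand_le j f x))

/-- Dominated convergence for `S_j f` along a sequence of indices. -/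
theorem IsLPCutoff.tendsto_low_of_tendsto_symbol (hχ : IsLPCutoff χ) (σ : ℕ → ℤ)
    (f : 𝓢(EuclideanSpace ℝ (Fin n), ℂ)) (x : EuclideanSpace ℝ (Fin n)) (c : ℂ)
    (h : ∀ᵐ ξ : EuclideanSpace ℝ (Fin n),
      ∀ᶠ N in atTop, ((χ ((2 : ℝ) ^ (-σ N) • ξ) : ℝ) : ℂ) = c) :
    Tendsto (fun N => hχ.low (σ N) f x) atTop (nhds (c * f x)) := by
  have hf : f x = ∫ ξ, 𝐞 (inner ℝ ξ x) • 𝓕 f ξ := by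
    have h : 𝓕⁻ (𝓕 f : 𝓢(EuclideanSpace ℝ (Fin n), ℂ)) = f :=
      FourierTransform.fourierInv_fourier_eq _
    conv_lhs => rw [← h]
    rw [SchwartzMap.fourierInv_coe, Real.fourierInv_eq]
  rw [hf, ← integral_const_mul]
  simp only [hχ.low_apply_eq_integral_fourier]
  refine tendsto_integral_of_dominated_convergence (fun ξ => ‖𝓕 f ξ‖) (fun N => ?_)
    (SchwartzMap.integrable _).norm
    (fun N => Eventually.of_forall (hχ.norm_integrand_le (σ N) f x)) ?_
  · have h1 := hχ.1.continuous
    have h2 := (𝓕 f : 𝓢(EuclideanSpace ℝ (Fin n), ℂ)).continuous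
    have h3 := Real.continuous_fourierChar
    simp only [Circle.smul_def]
    refine Continuous.aestronglyMeasurable ?_
    fun_prop
  · filter_upwards [h] with ξ hξ
    refine tendsto_const_nhds.congr' ?_
    filter_upwards [hξ] with N hN
    rw [hN, mul_smul_comm]

theorem IsLPCutoff.tendsto_low_atTop (hχ : IsLPCutoff χ) (a : ℤ)
    (f : 𝓢(EuclideanSpace ℝ (Fin n), ℂ)) (x : EuclideanSpace ℝ (Fin n)) :
    Tendsto (fun N : ℕ => hχ.low (a + N) f x) atTop (nhds (f x)) := by
  have H := hχ.tendsto_low_of_tendsto_symbol (fun N => a + N) f x 1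
    (Eventually.of_forall fun ξ => ?_)
  · simpa using H
  have ht : Tendsto (fun N : ℕ => (2 : ℝ) ^ a * (3 / 4) * 2 ^ N) atTop atTop :=
    (tendsto_pow_atTop_atTop_of_one_lt one_lt_two).const_mul_atTop (by positivity)
  filter_upwards [ht.eventually_ge_atTop ‖ξ‖] with N hN
  rw [hχ.symbol_dilate_eq_one, Complex.ofReal_one]
  rw [zpow_add₀ two_ne_zero, zpow_natCast]
  linarith

theorem IsLPCutoff.tendsto_low_atBot (hn : 1 ≤ n) (hχ : IsLPCutoff χ) (a : ℤ)
    (f : 𝓢(EuclideanSpace ℝ (Fin n), ℂ)) (x : EuclideanSpace ℝ (Fin n)) :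
    Tendsto (fun N : ℕ => hχ.low (a - N) f x) atTop (nhds 0) := by
  have : Nonempty (Fin n) := ⟨⟨0, hn⟩⟩
  have H := hχ.tendsto_low_of_tendsto_symbol (fun N => a - N) f x 0 ?_
  · simpa using H
  filter_upwards [Measure.ae_ne volume (0 : EuclideanSpace ℝ (Fin n))] with ξ hξ
  have ht : Tendsto (fun N : ℕ => (2 : ℝ) ^ a * (4 / 3) * (1 / 2) ^ N) atTop (nhds 0) := by
    simpa using (tendsto_pow_atTop_nhds_zero_of_lt_one (r := (1 / 2 : ℝ)) (by norm_num)
      (by norm_num)).const_mul ((2 : ℝ) ^ a * (4 / 3))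
  filter_upwards [ht.eventually_lt_const (norm_pos_iff.2 hξ)] with N hN
  rw [hχ.symbol_dilate_eq_zero, Complex.ofReal_zero]
  rw [zpow_sub₀ two_ne_zero, zpow_natCast]
  refine lt_of_eq_of_lt ?_ hN
  rw [one_div, inv_pow]
  ring

theorem IsLPCutoff.tendsto_low_of_bounded (hχ : IsLPCutoff χ) (j : ℤ)
    {g : ℕ → 𝓢(EuclideanSpace ℝ (Fin n), ℂ)} {f : 𝓢(EuclideanSpace ℝ (Fin n), ℂ)} {M : ℝ}
    (hM : ∀ N x, ‖g N x‖ ≤ M) (hg : ∀ x, Tendsto (fun N => g N x) atTop (nhds (f x)))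
    (x : EuclideanSpace ℝ (Fin n)) :
    Tendsto (fun N => hχ.low j (g N) x) atTop (nhds (hχ.low j f x)) := by
  simp only [hχ.low_apply]
  refine tendsto_integral_of_dominated_convergence (fun t => ‖𝓕⁻ (hχ.symbol j) t‖ * M)
    (fun N => ?_) ((SchwartzMap.integrable _).norm.mul_const M)
    (fun N => Eventually.of_forall fun t => ?_) (Eventually.of_forall fun t => ?_)
  · have h1 := (𝓕⁻ (hχ.symbol j) : 𝓢(EuclideanSpace ℝ (Fin n), ℂ)).continuous
    have h2 := (g N).continuous
    refine Continuous.aestronglyMeasurable ?_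
    fun_prop
  · rw [norm_mul]
    gcongr
    exact hM _ _
  · exact (hg _).const_mul _

theorem IsLPCutoff.tendsto_block_of_bounded (hχ : IsLPCutoff χ) (j : ℤ)
    {g : ℕ → 𝓢(EuclideanSpace ℝ (Fin n), ℂ)} {f : 𝓢(EuclideanSpace ℝ (Fin n), ℂ)} {M : ℝ}
    (hM : ∀ N x, ‖g N x‖ ≤ M) (hg : ∀ x, Tendsto (fun N => g N x) atTop (nhds (f x)))
    (x : EuclideanSpace ℝ (Fin n)) :
    Tendsto (fun N => hχ.block j (g N) x) atTop (nhds (hχ.block j f x)) :=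
  (hχ.tendsto_low_of_bounded (j + 1) hM hg x).sub (hχ.tendsto_low_of_bounded j hM hg x)

/-- Low frequency parts are controlled by the Littlewood–Paley blocks below them. -/
theorem IsLPCutoff.eLpNorm_low_le_tsum (hn : 1 ≤ n) (hχ : IsLPCutoff χ) {p : ℝ≥0∞} (hp : 1 ≤ p)
    (k : ℤ) (f : 𝓢(EuclideanSpace ℝ (Fin n), ℂ)) :
    eLpNorm (hχ.low k f) p volume ≤
      ∑' m : ℕ, eLpNorm (hχ.block (k - 1 - m) f) p volume := by
  refine eLpNorm_le_tsum_of_tendsto hp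
    (fun m => (SchwartzMap.continuous _).aestronglyMeasurable) fun x => ?_
  have h (N : ℕ) : ∑ m ∈ Finset.range N, hχ.block (k - 1 - m) f x =
      hχ.low k f x - hχ.low (k - N) f x := by
    induction N with
    | zero => simp
    | succ N ih =>
      rw [Finset.sum_range_succ, ih, IsLPCutoff.block, sub_apply]
      have e1 : k - 1 - (N : ℤ) + 1 = k - N := by ring
      have e2 : k - 1 - (N : ℤ) = k - (N + 1 : ℕ) := by push_cast; ring
      rw [e1, e2]
      ring
  simp only [h]
  simpa using (hχ.tendsto_low_atBot hn k f x).const_sub (hχ.low k f x)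

theorem schwartzMul_low_succ_sub (hχ : IsLPCutoff χ) (k : ℤ)
    (f g : 𝓢(EuclideanSpace ℝ (Fin n), ℂ)) :
    schwartzMul (hχ.low (k + 1) f) (hχ.low (k + 1) g) - schwartzMul (hχ.low k f) (hχ.low k g) =
      schwartzMul (hχ.block k f) (hχ.low (k + 1) g) +
        schwartzMul (hχ.low k f) (hχ.block k g) := by
  ext x
  simp only [sub_apply, add_apply, schwartzMul_apply, IsLPCutoff.block]
  ring

theorem IsLPCutoff.block_sub (hχ : IsLPCutoff χ) (j : ℤ)
    (f g : 𝓢(EuclideanSpace ℝ (Fin n), ℂ)) :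
    hχ.block j (f - g) = hχ.block j f - hχ.block j g := by
  simp only [IsLPCutoff.block, IsLPCutoff.low, map_sub]
  abel

/-- The paraproduct bound for a single block of a product. -/
theorem IsLPCutoff.eLpNorm_block_mul_le (hχ : IsLPCutoff χ) {p : ℝ≥0∞} (hp : 1 ≤ p) (j : ℤ)
    (f g : 𝓢(EuclideanSpace ℝ (Fin n), ℂ)) :
    eLpNorm (hχ.block j (schwartzMul f g)) p volume ≤
      2 * hχ.kernelNorm * ∑' m : ℕ,
        (eLpNorm (schwartzMul (hχ.block (j + (m - 2)) f) (hχ.low (j + (m - 2) + 1) g)) p volume +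
          eLpNorm (schwartzMul (hχ.low (j + (m - 2)) f) (hχ.block (j + (m - 2)) g)) p volume) := by
  set P : ℕ → 𝓢(EuclideanSpace ℝ (Fin n), ℂ) := fun N =>
    schwartzMul (hχ.low (j - 2 + N) f) (hχ.low (j - 2 + N) g) with hP
  have hP0 : hχ.block j (P 0) = 0 := by
    simpa [hP] using hχ.block_mul_low_low j f g
  have hlim (x : EuclideanSpace ℝ (Fin n)) :
      Tendsto (fun N => hχ.block j (P N) x) atTop (nhds (hχ.block j (schwartzMul f g) x)) := by
    refine hχ.tendsto_block_of_bounded j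
      (M := (∫ ξ, ‖𝓕 f ξ‖) * ∫ ξ, ‖𝓕 g ξ‖) (fun N x => ?_) (fun x => ?_) x
    · rw [schwartzMul_apply, norm_mul]
      exact mul_le_mul (hχ.norm_low_le _ f x) (hχ.norm_low_le _ g x) (norm_nonneg _)
        (integral_nonneg fun _ => norm_nonneg _)
    · exact (hχ.tendsto_low_atTop _ f x).mul (hχ.tendsto_low_atTop _ g x)
  have hsum (N : ℕ) (x : EuclideanSpace ℝ (Fin n)) :
      ∑ m ∈ Finset.range N, hχ.block j (P (m + 1) - P m) x = hχ.block j (P N) x := by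
    simp only [hχ.block_sub, sub_apply]
    rw [Finset.sum_range_sub (fun N => hχ.block j (P N) x), hP0, zero_apply, sub_zero]
  rw [← ENNReal.tsum_mul_left]
  refine (eLpNorm_le_tsum_of_tendsto hp (u := fun m => ⇑(hχ.block j (P (m + 1) - P m)))
    (fun m => (SchwartzMap.continuous _).aestronglyMeasurable)
    (fun x => by simpa only [hsum] using hlim x)).trans (ENNReal.tsum_le_tsum fun m => ?_)
  have e1 : j - 2 + ((m + 1 : ℕ) : ℤ) = j + (m - 2) + 1 := by push_cast; ring
  have e2 : j - 2 + (m : ℤ) = j + (m - 2) := by ring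
  refine (hχ.eLpNorm_block_le hp j _).trans ?_
  gcongr
  simp only [hP, e1, e2, schwartzMul_low_succ_sub]
  exact eLpNorm_add_le (SchwartzMap.continuous _).aestronglyMeasurable
    (SchwartzMap.continuous _).aestronglyMeasurable hp

theorem eLpNorm_schwartzMul_le {p p₁ p₂ : ℝ≥0∞} (h : 1 / p = 1 / p₁ + 1 / p₂)
    (f g : 𝓢(EuclideanSpace ℝ (Fin n), ℂ)) :
    eLpNorm (schwartzMul f g) p volume ≤ eLpNorm f p₁ volume * eLpNorm g p₂ volume := by
  have : ENNReal.HolderTriple p₁ p₂ p := ⟨by simpa using h.symm⟩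
  have e : ⇑(schwartzMul f g) = ⇑f • ⇑g := rfl
  rw [e]
  exact eLpNorm_smul_le_mul_eLpNorm g.continuous.aestronglyMeasurable
    f.continuous.aestronglyMeasurable

theorem tsum_two_rpow_neg_lt_top {s c : ℝ} (hs : 0 < s) :
    ∑' m : ℕ, (2 : ℝ≥0∞) ^ ((c - m) * s) < ∞ := by
  have e (m : ℕ) : (2 : ℝ≥0∞) ^ ((c - m) * s) = 2 ^ (c * s) * ((2 : ℝ≥0∞) ^ (-s)) ^ m := by
    rw [← ENNReal.rpow_natCast, ← ENNReal.rpow_mul,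
      ← ENNReal.rpow_add _ _ two_ne_zero ENNReal.ofNat_ne_top]
    ring_nf
  simp_rw [e]
  rw [ENNReal.tsum_mul_left, ENNReal.tsum_geometric]
  refine ENNReal.mul_lt_top (by finiteness) (ENNReal.inv_lt_top.2 (tsub_pos_of_lt ?_))
  exact ENNReal.rpow_lt_one_of_one_lt_of_neg (by norm_num) (by linarith)

/-- The low frequency parts `S_{k+a} f`, weighted by a negative power, are controlled by the
homogeneous Besov norm of negative regularity. -/
theorem IsLPCutoff.lqNorm_low_le (hn : 1 ≤ n) (hχ : IsLPCutoff χ) {p q : ℝ≥0∞} (hp : 1 ≤ p)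
    (hq : 1 ≤ q) (α : ℝ) (a : ℤ) (f : 𝓢(EuclideanSpace ℝ (Fin n), ℂ)) :
    lqNorm q (fun k => (2 : ℝ≥0∞) ^ ((k : ℝ) * -α) * eLpNorm (hχ.low (k + a) f) p volume) ≤
      (∑' m : ℕ, (2 : ℝ≥0∞) ^ (((a - 1 : ℤ) - m : ℝ) * α)) * besovNorm χ (-α) p q f := by
  rw [besovNorm]
  refine (lqNorm_mono fun k => ?_).trans
    (lqNorm_tsum_mul_translate_le hq _ (fun m : ℕ => a - 1 - m) _)
  refine (mul_le_mul_right (hχ.eLpNorm_low_le_tsum hn hp (k + a) f) _).trans_eq ?_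
  rw [← ENNReal.tsum_mul_left]
  refine tsum_congr fun m => ?_
  rw [← mul_assoc, ← ENNReal.rpow_add _ _ two_ne_zero ENNReal.ofNat_ne_top, hχ.Dproj_eq]
  congr 2
  · push_cast
    ring
  · congr 2
    ring

/-- The weighted sequence bounding the dyadic pieces `Δ_k f · S_{k+1} g + S_k f · Δ_k g` of a
product. -/
def IsLPCutoff.productSeq (hχ : IsLPCutoff χ) (s α β : ℝ) (p₁ p₂ p₃ p₄ : ℝ≥0∞)
    (f g : 𝓢(EuclideanSpace ℝ (Fin n), ℂ)) (k : ℤ) : ℝ≥0∞ :=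
  ((2 : ℝ≥0∞) ^ ((k : ℝ) * (s + α)) * eLpNorm (hχ.block k f) p₁ volume) *
      ((2 : ℝ≥0∞) ^ ((k : ℝ) * -α) * eLpNorm (hχ.low (k + 1) g) p₂ volume) +
    ((2 : ℝ≥0∞) ^ ((k : ℝ) * -β) * eLpNorm (hχ.low (k + 0) f) p₃ volume) *
      ((2 : ℝ≥0∞) ^ ((k : ℝ) * (s + β)) * eLpNorm (hχ.block k g) p₄ volume)

theorem IsLPCutoff.two_rpow_mul_eLpNorm_block_mul_le (hχ : IsLPCutoff χ)
    {p p₁ p₂ p₃ p₄ : ℝ≥0∞} (hp : 1 ≤ p)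
    (hp12 : 1 / p = 1 / p₁ + 1 / p₂) (hp34 : 1 / p = 1 / p₃ + 1 / p₄) (s α β : ℝ) (j : ℤ)
    (f g : 𝓢(EuclideanSpace ℝ (Fin n), ℂ)) :
    (2 : ℝ≥0∞) ^ ((j : ℝ) * s) * eLpNorm (hχ.block j (schwartzMul f g)) p volume ≤
      2 * hχ.kernelNorm * ∑' m : ℕ, (2 : ℝ≥0∞) ^ (((2 : ℝ) - m) * s) *
        hχ.productSeq s α β p₁ p₂ p₃ p₄ f g (j + (m - 2)) := by
  have split (a b : ℝ) (u v : ℝ≥0∞) :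
      ((2 : ℝ≥0∞) ^ a * u) * (2 ^ b * v) = 2 ^ (a + b) * (u * v) := by
    rw [ENNReal.rpow_add _ _ two_ne_zero ENNReal.ofNat_ne_top]
    ring
  refine (mul_le_mul_right (hχ.eLpNorm_block_mul_le hp j f g) _).trans ?_
  rw [mul_left_comm, ← ENNReal.tsum_mul_left]
  refine mul_le_mul_right (ENNReal.tsum_le_tsum fun m => ?_) _
  simp only [IsLPCutoff.productSeq, split, add_zero]
  have e1 (γ : ℝ) : ((j + (m - 2) : ℤ) : ℝ) * (s + γ) + ((j + (m - 2) : ℤ) : ℝ) * -γ =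
      ((j + (m - 2) : ℤ) : ℝ) * s := by ring
  have e2 (γ : ℝ) : ((j + (m - 2) : ℤ) : ℝ) * -γ + ((j + (m - 2) : ℤ) : ℝ) * (s + γ) =
      ((j + (m - 2) : ℤ) : ℝ) * s := by ring
  rw [e1, e2, ← mul_add, ← mul_assoc, ← ENNReal.rpow_add _ _ two_ne_zero ENNReal.ofNat_ne_top]
  have e3 : ((2 : ℝ) - m) * s + ((j + (m - 2) : ℤ) : ℝ) * s = j * s := by
    push_cast
    ring
  rw [e3]
  gcongr
  · exact eLpNorm_schwartzMul_le hp12 _ _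
  · exact eLpNorm_schwartzMul_le hp34 _ _

end LittlewoodPaley

/-- **Hölder-type bilinear estimate in homogeneous Besov spaces** (Lemma 2.1).
For `s > 0`, `α, β > 0` and Hölder-related indices `p, pᵢ, q, qᵢ ∈ [1,∞]`, there is a
constant `C`, depending only on `n`, `χ`, `s`, `α`, `β` and the indices, such that
`‖f₁ f₂‖_{Ḃ^s_{p,q}} ≤ C (‖f₁‖_{Ḃ^{s+α}_{p₁,q₁}} ‖f₂‖_{Ḃ^{-α}_{p₂,q₂}} +
‖f₁‖_{Ḃ^{-β}_{p₃,q₃}} ‖f₂‖_{Ḃ^{s+β}_{p₄,q₄}})` for all Schwartz functions `f₁, f₂`. -/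
theorem besov_holder_bilinear_estimate
    (n : ℕ) (hn : 1 ≤ n) (χ : EuclideanSpace ℝ (Fin n) → ℝ) (hχ : IsLPCutoff χ)
    (s α β : ℝ) (hs : 0 < s) (hα : 0 < α) (hβ : 0 < β)
    (p q p₁ p₂ p₃ p₄ q₁ q₂ q₃ q₄ : ℝ≥0∞)
    (hp : 1 ≤ p) (hq : 1 ≤ q)
    (hp₁ : 1 ≤ p₁) (hp₂ : 1 ≤ p₂) (hp₃ : 1 ≤ p₃) (hp₄ : 1 ≤ p₄)
    (hq₁ : 1 ≤ q₁) (hq₂ : 1 ≤ q₂) (hq₃ : 1 ≤ q₃) (hq₄ : 1 ≤ q₄)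
    (hp12 : 1 / p = 1 / p₁ + 1 / p₂) (hp34 : 1 / p = 1 / p₃ + 1 / p₄)
    (hq12 : 1 / q = 1 / q₁ + 1 / q₂) (hq34 : 1 / q = 1 / q₃ + 1 / q₄) :
    ∃ C : ℝ≥0∞, 0 < C ∧ C < ∞ ∧
      ∀ f₁ f₂ : 𝓢(EuclideanSpace ℝ (Fin n), ℂ),
        besovNorm χ s p q (fun x => f₁ x * f₂ x) ≤
          C * (besovNorm χ (s + α) p₁ q₁ ⇑f₁ * besovNorm χ (-α) p₂ q₂ ⇑f₂
            + besovNorm χ (-β) p₃ q₃ ⇑f₁ * besovNorm χ (s + β) p₄ q₄ ⇑f₂) := by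
  set G₀ := ∑' m : ℕ, (2 : ℝ≥0∞) ^ (((2 : ℝ) - m) * s)
  set G₁ := ∑' m : ℕ, (2 : ℝ≥0∞) ^ ((((1 : ℤ) - 1 : ℤ) - m : ℝ) * α)
  set G₂ := ∑' m : ℕ, (2 : ℝ≥0∞) ^ ((((0 : ℤ) - 1 : ℤ) - m : ℝ) * β)
  have hG₀ : G₀ < ∞ := tsum_two_rpow_neg_lt_top hs
  have hG₁ : G₁ < ∞ := tsum_two_rpow_neg_lt_top hα
  have hG₂ : G₂ < ∞ := tsum_two_rpow_neg_lt_top hβ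
  have hA := hχ.kernelNorm_lt_top
  refine ⟨2 * hχ.kernelNorm * (G₀ * (G₁ + G₂)) + 1, by positivity, by finiteness,
    fun f₁ f₂ => ?_⟩
  have hlow₁ := hχ.lqNorm_low_le hn hp₂ hq₂ α 1 f₂
  have hlow₂ := hχ.lqNorm_low_le hn hp₃ hq₃ β 0 f₁
  have hprod : besovNorm χ s p q (fun x => f₁ x * f₂ x) = lqNorm q fun j =>
      (2 : ℝ≥0∞) ^ ((j : ℝ) * s) * eLpNorm (hχ.block j (schwartzMul f₁ f₂)) p volume := by
    simp only [besovNorm, ← hχ.Dproj_eq]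
    rfl
  have h₁ : besovNorm χ (s + α) p₁ q₁ f₁ = lqNorm q₁ fun k =>
      (2 : ℝ≥0∞) ^ ((k : ℝ) * (s + α)) * eLpNorm (hχ.block k f₁) p₁ volume := by
    simp only [besovNorm, hχ.Dproj_eq]
  have h₂ : besovNorm χ (s + β) p₄ q₄ f₂ = lqNorm q₄ fun k =>
      (2 : ℝ≥0∞) ^ ((k : ℝ) * (s + β)) * eLpNorm (hχ.block k f₂) p₄ volume := by
    simp only [besovNorm, hχ.Dproj_eq]
  set N₁ := besovNorm χ (s + α) p₁ q₁ f₁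
  set N₂ := besovNorm χ (-α) p₂ q₂ f₂
  set N₃ := besovNorm χ (-β) p₃ q₃ f₁
  set N₄ := besovNorm χ (s + β) p₄ q₄ f₂
  calc besovNorm χ s p q (fun x => f₁ x * f₂ x)
      ≤ 2 * hχ.kernelNorm * (G₀ * (N₁ * (G₁ * N₂) + G₂ * N₃ * N₄)) := by
        rw [hprod]
        refine (lqNorm_mono fun j => hχ.two_rpow_mul_eLpNorm_block_mul_le hp hp12 hp34
          s α β j f₁ f₂).trans ((lqNorm_const_mul_le hq _ _).trans ?_)
        gcongr
        refine (lqNorm_tsum_mul_translate_le hq _ (fun m : ℕ => (m : ℤ) - 2)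
          (hχ.productSeq s α β p₁ p₂ p₃ p₄ f₁ f₂)).trans ?_
        gcongr
        refine (lqNorm_add_le hq _ _).trans (add_le_add ?_ ?_)
        · refine (lqNorm_mul_le hq hq₁ hq₂ hq12 _ _).trans ?_
          rw [← h₁]
          gcongr
        · refine (lqNorm_mul_le hq hq₃ hq₄ hq34 _ _).trans ?_
          rw [← h₂]
          gcongr
    _ ≤ 2 * hχ.kernelNorm * (G₀ * ((G₁ + G₂) * (N₁ * N₂ + N₃ * N₄))) := by
        gcongr
        calc N₁ * (G₁ * N₂) + G₂ * N₃ * N₄ = G₁ * (N₁ * N₂) + G₂ * (N₃ * N₄) := by ring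
          _ ≤ (G₁ + G₂) * (N₁ * N₂) + (G₁ + G₂) * (N₃ * N₄) := by
            gcongr
            · exact le_self_add
            · exact le_add_self
          _ = _ := by ring
    _ = 2 * hχ.kernelNorm * (G₀ * (G₁ + G₂)) * (N₁ * N₂ + N₃ * N₄) := by ring
    _ ≤ _ := by
        gcongr
        exact le_self_add
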